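/- For all 𝒵-measurable integrable real random variables M₁ and M₀ such that the displayed signal is integrable, E[M₁ − M₀ + (D·T/(S·H))·(Y° − M₁) − (D·(1−T)/(S·(1−H)))·(Y° − M₀) | 𝒵] = E[Y¹ − Y⁰ | 𝒵] a.s.; that is, in a randomized experiment with a partially missing outcome, the doubly robust signal that weights by both the treatment propensity and the missingness propensity is an unbiased signal for the conditional average treatment effect. -/

import Mathlib

open MeasureTheory Filter
open scoped ENNReal

/-!
Conditional expectation is linear over the functions measurable for the conditioning σ-algebra as
soon as the whole combination is integrable, even when its terms are not. The signal is such a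
combination of `1`, `D Y¹`, `D Y⁰` and `D` with `𝒲`-measurable weights. Conditioning on `𝒲`
multiplies each residual by `S`, which cancels the missingness weight and leaves the signal for
fully observed outcomes `E[Y¹ | 𝒵]` and `E[Y⁰ | 𝒵]`. That signal is affine in `T` over the
`𝒵`-measurable functions, and conditioning on `𝒵` replaces `T` by `H`, which cancels the treatment
weights together with the plug-ins.
-/

section ConditionalExpectation

variable {Ω ι E : Type*} {m mΩ : MeasurableSpace Ω} {μ : Measure Ω}
  [NormedAddCommGroup E] [NormedSpace ℝ E] [CompleteSpace E]

omit [CompleteSpace E] in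
theorem integrable_of_condExp_ne_zero {f : Ω → E} (hf : ∀ᵐ ω ∂μ, (μ[f | m]) ω ≠ 0) :
    Integrable f μ := by
  by_contra h
  have hμ : μ = 0 := by simpa [condExp_of_not_integrable h, ← ae_eq_bot] using hf
  exact h (hμ ▸ integrable_zero_measure)

theorem condExp_pi_apply [Fintype ι] {G : ι → Type*} [∀ i, NormedAddCommGroup (G i)]
    [∀ i, NormedSpace ℝ (G i)] [∀ i, CompleteSpace (G i)] {f : ∀ i, Ω → G i}
    (hf : ∀ i, Integrable (f i) μ) :
    ∀ᵐ ω ∂μ, ∀ i, (μ[fun ω i ↦ f i ω | m]) ω i = (μ[f i | m]) ω :=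
  ae_all_iff.2 fun i ↦
    (ContinuousLinearMap.proj (R := ℝ) (φ := G) i).comp_condExp_comm (.of_eval hf)

theorem aestronglyMeasurable_pi_lambda [Finite ι] {G : ι → Type*} [∀ i, AddCommMonoid (G i)]
    [∀ i, TopologicalSpace (G i)] [∀ i, ContinuousAdd (G i)] {f : ∀ i, Ω → G i}
    (hf : ∀ i, AEStronglyMeasurable[m] (f i) μ) :
    AEStronglyMeasurable[m] (fun ω i ↦ f i ω) μ := by
  classical
  cases nonempty_fintype ι
  refine ⟨fun ω i ↦ (hf i).mk (f i) ω, ?_, ?_⟩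
  · have hsum : (fun ω i ↦ (hf i).mk (f i) ω) =
        fun ω ↦ ∑ i, Pi.single i ((hf i).mk (f i) ω) := by ext; simp
    rw [hsum]
    exact Finset.stronglyMeasurable_fun_sum _ fun i _ ↦
      (continuous_single i).comp_stronglyMeasurable (hf i).stronglyMeasurable_mk
  · filter_upwards [ae_all_iff.2 fun i ↦ (hf i).ae_eq_mk] with ω hω using funext hω

-- The pull-out property applied to the pairing of `ℝ^ι` with `E^ι` needs only the integrability
-- of the sum; pulling out the weights one term at a time would need that of every summand.
theorem condExp_sum_smul_of_aestronglyMeasurable_left [Fintype ι] {w : ι → Ω → ℝ} {f : ι → Ω → E}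
    (hw : ∀ i, AEStronglyMeasurable[m] (w i) μ) (hf : ∀ i, Integrable (f i) μ)
    (hwf : Integrable (fun ω ↦ ∑ i, w i ω • f i ω) μ) :
    μ[fun ω ↦ ∑ i, w i ω • f i ω | m] =ᵐ[μ] fun ω ↦ ∑ i, w i ω • (μ[f i | m]) ω := by
  let B : (ι → ℝ) →L[ℝ] (ι → E) →L[ℝ] E :=
    ∑ i, (ContinuousLinearMap.lsmul ℝ ℝ).bilinearComp (.proj i) (.proj i)
  have hB (a : ι → ℝ) (x : ι → E) : B a x = ∑ i, a i • x i := by simp [B]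
  have hpull := condExp_bilin_of_aestronglyMeasurable_left B (aestronglyMeasurable_pi_lambda hw)
    (by simpa only [hB] using hwf) (.of_eval hf)
  simp only [hB] at hpull
  filter_upwards [hpull, condExp_pi_apply (m := m) hf] with ω hω hcoord
  rw [hω]
  exact Finset.sum_congr rfl fun i _ ↦ by rw [hcoord i]

end ConditionalExpectation

section Signal

variable {Ω : Type*} {m mΩ : MeasurableSpace Ω} {μ : Measure Ω} {T D H S M1 M0 Y1 Y0 N1 N0 : Ω → ℝ}

/-- The augmented inverse propensity weighted signal for the contrast of the outcomes `Y1` and `Y0`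
under treatment indicator `T`, propensity `H` and plug-in regressions `M1`, `M0`. Both outcomes
appear as if observed; the weights `T / H` and `(1 - T) / (1 - H)` select the realized one. -/
noncomputable def aipwSignal (T H M1 M0 Y1 Y0 : Ω → ℝ) (ω : Ω) : ℝ :=
  M1 ω - M0 ω + T ω / H ω * (Y1 ω - M1 ω) - (1 - T ω) / (1 - H ω) * (Y0 ω - M0 ω)

/-- The augmented inverse propensity weighted signal when only the outcomes with `D = 1` are
present: the treatment weights are divided by the missingness propensity `S`, and `Y` is the
recorded outcome. -/
noncomputable def missingAipwSignal (T D H S M1 M0 Y : Ω → ℝ) (ω : Ω) : ℝ :=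
  M1 ω - M0 ω + D ω * T ω / (S ω * H ω) * (Y ω - M1 ω)
    - D ω * (1 - T ω) / (S ω * (1 - H ω)) * (Y ω - M0 ω)

theorem condExp_aipwSignal_ae_eq_sub [IsFiniteMeasure μ] (hm : m ≤ mΩ)
    (hH : H =ᵐ[μ] μ[T | m]) (hH0 : ∀ᵐ ω ∂μ, H ω ≠ 0) (hH1 : ∀ᵐ ω ∂μ, H ω ≠ 1)
    (hM1 : AEStronglyMeasurable[m] M1 μ) (hM0 : AEStronglyMeasurable[m] M0 μ)
    (hY1 : AEStronglyMeasurable[m] Y1 μ) (hY0 : AEStronglyMeasurable[m] Y0 μ)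
    (hint : Integrable (aipwSignal T H M1 M0 Y1 Y0) μ) :
    μ[aipwSignal T H M1 M0 Y1 Y0 | m] =ᵐ[μ] Y1 - Y0 := by
  have hTint : Integrable T μ :=
    integrable_of_condExp_ne_zero (m := m) <| by filter_upwards [hH, hH0] with ω h h0 using h ▸ h0
  have hHm : AEStronglyMeasurable[m] H μ :=
    stronglyMeasurable_condExp.aestronglyMeasurable.congr hH.symm
  let u : Ω → ℝ := (Y1 - M1) / H
  let v : Ω → ℝ := (Y0 - M0) / (1 - H)
  have hu : AEStronglyMeasurable[m] u μ := (hY1.sub hM1).div₀ hHm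
  have hv : AEStronglyMeasurable[m] v μ :=
    (hY0.sub hM0).div₀ (aestronglyMeasurable_one.sub hHm)
  have haffine : aipwSignal T H M1 M0 Y1 Y0 =
      fun ω ↦ ∑ i, ![M1 - M0 - v, u + v] i ω • ![1, T] i ω := by
    ext ω
    simp only [aipwSignal, u, v, Fin.sum_univ_two, Matrix.cons_val_zero, Matrix.cons_val_one,
      smul_eq_mul, Pi.sub_apply, Pi.add_apply, Pi.div_apply, Pi.one_apply]
    ring
  rw [haffine] at hint ⊢
  filter_upwards [condExp_sum_smul_of_aestronglyMeasurable_left (m := m)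
    (Fin.forall_fin_two.2 ⟨(hM1.sub hM0).sub hv, hu.add hv⟩)
    (Fin.forall_fin_two.2 ⟨integrable_const 1, hTint⟩) hint, hH, hH0, hH1] with ω hω hHω h0 h1
  have h1' : 1 - H ω ≠ 0 := sub_ne_zero.2 h1.symm
  have hone : μ[(1 : Ω → ℝ) | m] = 1 := condExp_const hm 1
  calc
    _ = (M1 ω - M0 ω - v ω) + (u ω + v ω) * H ω := by
      rw [hω]
      simp [hone, ← hHω]
    _ = Y1 ω - Y0 ω := by
      simp only [u, v, Pi.sub_apply, Pi.div_apply, Pi.one_apply]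
      field_simp
      ring

theorem missingAipwSignal_eq_sum
    (hT01 : ∀ ω, T ω = 0 ∨ T ω = 1) (hD01 : ∀ ω, D ω = 0 ∨ D ω = 1) :
    missingAipwSignal T D H S M1 M0 (fun ω ↦ D ω * (T ω * Y1 ω + (1 - T ω) * Y0 ω)) = fun ω ↦
      ∑ i, ![M1 - M0, T / (S * H), -((1 - T) / (S * (1 - H))),
        (1 - T) / (S * (1 - H)) * M0 - T / (S * H) * M1] i ω • ![1, D * Y1, D * Y0, D] i ω := by
  ext ω
  rcases hT01 ω with hT | hT <;> rcases hD01 ω with hD | hD <;>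
    simp only [missingAipwSignal, Fin.sum_univ_four, Matrix.cons_val, smul_eq_mul, Pi.sub_apply,
      Pi.mul_apply, Pi.div_apply, Pi.neg_apply, Pi.one_apply, hT, hD] <;>
    ring

theorem condExp_missingAipwSignal_ae_eq_aipwSignal [IsFiniteMeasure μ] (hm : m ≤ mΩ)
    (hT01 : ∀ ω, T ω = 0 ∨ T ω = 1) (hD01 : ∀ ω, D ω = 0 ∨ D ω = 1)
    (hT : AEStronglyMeasurable[m] T μ) (hH : AEStronglyMeasurable[m] H μ)
    (hS : S =ᵐ[μ] μ[D | m]) (hS0 : ∀ᵐ ω ∂μ, S ω ≠ 0)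
    (hM1 : AEStronglyMeasurable[m] M1 μ) (hM0 : AEStronglyMeasurable[m] M0 μ)
    (hY1 : Integrable Y1 μ) (hY0 : Integrable Y0 μ)
    (hDY1 : μ[D * Y1 | m] =ᵐ[μ] S * N1) (hDY0 : μ[D * Y0 | m] =ᵐ[μ] S * N0)
    (hint : Integrable (missingAipwSignal T D H S M1 M0
      fun ω ↦ D ω * (T ω * Y1 ω + (1 - T ω) * Y0 ω)) μ) :
    μ[missingAipwSignal T D H S M1 M0 fun ω ↦ D ω * (T ω * Y1 ω + (1 - T ω) * Y0 ω) | m]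
      =ᵐ[μ] aipwSignal T H M1 M0 N1 N0 := by
  have hD : Integrable D μ :=
    integrable_of_condExp_ne_zero (m := m) <| by filter_upwards [hS, hS0] with ω h h0 using h ▸ h0
  have hD_le : ∀ᵐ ω ∂μ, ‖D ω‖ ≤ 1 := ae_of_all _ fun ω ↦ by
    rcases hD01 ω with h | h <;> simp [h]
  have hSm : AEStronglyMeasurable[m] S μ :=
    stronglyMeasurable_condExp.aestronglyMeasurable.congr hS.symm
  have hw1 : AEStronglyMeasurable[m] (T / (S * H)) μ := hT.div₀ (hSm.mul hH)
  have hw0 : AEStronglyMeasurable[m] ((1 - T) / (S * (1 - H))) μ :=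
    (aestronglyMeasurable_one.sub hT).div₀ (hSm.mul (aestronglyMeasurable_one.sub hH))
  rw [missingAipwSignal_eq_sum hT01 hD01] at hint ⊢
  filter_upwards [condExp_sum_smul_of_aestronglyMeasurable_left (m := m)
    (by simpa [Fin.forall_fin_succ] using
      ⟨hM1.sub hM0, hw1, hw0.neg, (hw0.mul hM0).sub (hw1.mul hM1)⟩)
    (by simpa [Fin.forall_fin_succ] using
      ⟨integrable_const 1, hY1.bdd_mul hD.1 hD_le, hY0.bdd_mul hD.1 hD_le, hD⟩)
    hint, hS, hS0, hDY1, hDY0] with ω hω hSω h0 h1 h2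
  have hone : μ[(1 : Ω → ℝ) | m] = 1 := condExp_const hm 1
  calc
    _ = M1 ω - M0 ω + T ω / (S ω * H ω) * (S ω * N1 ω)
          - (1 - T ω) / (S ω * (1 - H ω)) * (S ω * N0 ω)
          + ((1 - T ω) / (S ω * (1 - H ω)) * M0 ω - T ω / (S ω * H ω) * M1 ω) * S ω := by
      rw [hω]
      simp [Fin.sum_univ_four, hone, h1, h2, ← hSω, sub_eq_add_neg]
    _ = aipwSignal T H M1 M0 N1 N0 ω := by
      simp only [aipwSignal, div_mul_eq_div_div]
      field_simp
      ring

end Signal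

theorem dr_signal_unbiased_experiment_missing_outcome_general
    {Ω : Type*} {𝒵 𝒲 m0 : MeasurableSpace Ω} {μ : Measure Ω} [IsFiniteMeasure μ]
    (h𝒵𝒲 : 𝒵 ≤ 𝒲) (h𝒲 : 𝒲 ≤ m0) {T D Y1 Y0 H S Yo M1 M0 : Ω → ℝ}
    (hT01 : ∀ ω, T ω = 0 ∨ T ω = 1) (hD01 : ∀ ω, D ω = 0 ∨ D ω = 1)
    (hT : AEStronglyMeasurable[𝒲] T μ)
    (hYo : Yo = fun ω ↦ D ω * (T ω * Y1 ω + (1 - T ω) * Y0 ω))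
    (hH : H =ᵐ[μ] μ[T | 𝒵]) (hHpos : ∀ᵐ ω ∂μ, 0 < H ω ∧ H ω < 1)
    (hS : S =ᵐ[μ] μ[D | 𝒲]) (hSpos : ∀ᵐ ω ∂μ, 0 < S ω)
    (hY1 : Integrable Y1 μ) (hY0 : Integrable Y0 μ)
    (hMAR1 : μ[D * Y1 | 𝒲] =ᵐ[μ] S * μ[Y1 | 𝒲]) (hMAR0 : μ[D * Y0 | 𝒲] =ᵐ[μ] S * μ[Y0 | 𝒲])
    (hRA1 : μ[Y1 | 𝒲] =ᵐ[μ] μ[Y1 | 𝒵]) (hRA0 : μ[Y0 | 𝒲] =ᵐ[μ] μ[Y0 | 𝒵])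
    (hM1 : AEStronglyMeasurable[𝒵] M1 μ) (hM0 : AEStronglyMeasurable[𝒵] M0 μ)
    (hint : Integrable (missingAipwSignal T D H S M1 M0 Yo) μ) :
    μ[missingAipwSignal T D H S M1 M0 Yo | 𝒵] =ᵐ[μ] μ[Y1 - Y0 | 𝒵] := by
  subst hYo
  have hHm : AEStronglyMeasurable[𝒵] H μ :=
    stronglyMeasurable_condExp.aestronglyMeasurable.congr hH.symm
  have hcond𝒲 := condExp_missingAipwSignal_ae_eq_aipwSignal h𝒲 hT01 hD01 hT (hHm.mono h𝒵𝒲) hS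
    (hSpos.mono fun _ h ↦ h.ne') (hM1.mono h𝒵𝒲) (hM0.mono h𝒵𝒲) hY1 hY0
    (hMAR1.trans (hRA1.mono fun _ h ↦ congrArg (S _ * ·) h))
    (hMAR0.trans (hRA0.mono fun _ h ↦ congrArg (S _ * ·) h)) hint
  calc
    _ =ᵐ[μ] μ[μ[missingAipwSignal T D H S M1 M0 _ | 𝒲] | 𝒵] :=
      (condExp_condExp_of_le h𝒵𝒲 h𝒲).symm
    _ =ᵐ[μ] μ[aipwSignal T H M1 M0 (μ[Y1 | 𝒵]) (μ[Y0 | 𝒵]) | 𝒵] := condExp_congr_ae hcond𝒲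
    _ =ᵐ[μ] μ[Y1 | 𝒵] - μ[Y0 | 𝒵] :=
      condExp_aipwSignal_ae_eq_sub (h𝒵𝒲.trans h𝒲) hH (hHpos.mono fun _ h ↦ h.1.ne')
        (hHpos.mono fun _ h ↦ h.2.ne) hM1 hM0 stronglyMeasurable_condExp.aestronglyMeasurable
        stronglyMeasurable_condExp.aestronglyMeasurable (integrable_condExp.congr hcond𝒲)
    _ =ᵐ[μ] μ[Y1 - Y0 | 𝒵] := (condExp_sub hY1 hY0 𝒵).symm

/-- **Unbiasedness of the doubly robust signal in a randomized experiment with a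
partially missing outcome.** With nested sub-σ-algebras `𝒵 ⊆ 𝒲`, treatment
propensity `H = E[T | 𝒵]`, missingness propensity `S = E[D | 𝒲]`, observed outcome
`Y° = D·(T·Y¹ + (1−T)·Y⁰)`, missingness at random given `𝒲` and random treatment
assignment, for all 𝒵-measurable integrable plug-ins `M₁, M₀` such that the signal
is integrable,
`E[M₁ − M₀ + (DT/(SH))(Y° − M₁) − (D(1−T)/(S(1−H)))(Y° − M₀) | 𝒵] = E[Y¹ − Y⁰ | 𝒵]`
a.s. -/
theorem dr_signal_unbiased_experiment_missing_outcome
    {Ω : Type*} {m0 : MeasurableSpace Ω} {μ : Measure Ω} [IsProbabilityMeasure μ]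
    (𝒵 𝒲 : MeasurableSpace Ω) (h𝒵𝒲 : 𝒵 ≤ 𝒲) (h𝒲 : 𝒲 ≤ m0)
    (T D Y1 Y0 H S : Ω → ℝ)
    (hbar sbar : ℝ) (hhbar0 : 0 < hbar) (hhbar1 : hbar < 1 / 2)
    (hsbar0 : 0 < sbar) (hsbar1 : sbar < 1)
    (hT01 : ∀ ω, T ω = 0 ∨ T ω = 1) (hD01 : ∀ ω, D ω = 0 ∨ D ω = 1)
    (hTmeas : Measurable[𝒲] T)
    (Yo : Ω → ℝ) (hYo : Yo = fun ω => D ω * (T ω * Y1 ω + (1 - T ω) * Y0 ω))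
    (hHmeas : Measurable[𝒵] H)
    (hH : H =ᵐ[μ] μ[T | 𝒵])
    (hHbound : ∀ᵐ ω ∂μ, hbar ≤ H ω ∧ H ω ≤ 1 - hbar)
    (hSmeas : Measurable[𝒲] S)
    (hS : S =ᵐ[μ] μ[D | 𝒲])
    (hSbound : ∀ᵐ ω ∂μ, sbar ≤ S ω ∧ S ω ≤ 1)
    (hY1int : Integrable Y1 μ) (hY0int : Integrable Y0 μ)
    (hMAR1 : μ[fun ω => D ω * Y1 ω | 𝒲] =ᵐ[μ] fun ω => S ω * (μ[Y1 | 𝒲]) ω)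
    (hMAR0 : μ[fun ω => D ω * Y0 ω | 𝒲] =ᵐ[μ] fun ω => S ω * (μ[Y0 | 𝒲]) ω)
    (hRA1 : μ[Y1 | 𝒲] =ᵐ[μ] μ[Y1 | 𝒵])
    (hRA0 : μ[Y0 | 𝒲] =ᵐ[μ] μ[Y0 | 𝒵]) :
    ∀ M1 M0 : Ω → ℝ, Measurable[𝒵] M1 → Measurable[𝒵] M0 →
      Integrable M1 μ → Integrable M0 μ →
      Integrable (fun ω => M1 ω - M0 ω
        + D ω * T ω / (S ω * H ω) * (Yo ω - M1 ω)
        - D ω * (1 - T ω) / (S ω * (1 - H ω)) * (Yo ω - M0 ω)) μ →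
      μ[fun ω => M1 ω - M0 ω
          + D ω * T ω / (S ω * H ω) * (Yo ω - M1 ω)
          - D ω * (1 - T ω) / (S ω * (1 - H ω)) * (Yo ω - M0 ω) | 𝒵] =ᵐ[μ]
        μ[fun ω => Y1 ω - Y0 ω | 𝒵] := by
  intro M1 M0 hM1 hM0 _ _ hint
  exact dr_signal_unbiased_experiment_missing_outcome_general h𝒵𝒲 h𝒲 hT01 hD01
    hTmeas.aestronglyMeasurable hYo hH
    (hHbound.mono fun _ h ↦ ⟨hhbar0.trans_le h.1, by linarith [h.2]⟩)
    hS (hSbound.mono fun _ h ↦ hsbar0.trans_le h.1) hY1int hY0int hMAR1 hMAR0 hRA1 hRA0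
    hM1.aestronglyMeasurable hM0.aestronglyMeasurable hint
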